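/- If M is a reduced magic square of order 3, then there exist integers α ≥ −1 and β ≥ 0 such that M = T₁ + α·C + β·D (as matrices with integer entries). -/

import Mathlib

/-!
Up to the choice of its centre `e` and two differences `p`, `q`, a `3 × 3` array with constant line
sums is Lucas' square, and the order conditions on the corners of a reduced square say `0 < q < p`.
Every entry exceeds the top middle one, `e - p - q`, by the matching entry of `p C + q (D - C)`.
As `C` and `D - C` are nonnegative, the entry `0` forces `e = p + q`, and the square is
`(p - q) C + q D`. Since `T₁ = 2 C + D`, the coefficients are `α = p - q - 2` and `β = q - 1`.
-/

open Matrix Finset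

/-- `IsMagic M m` : every row sum, column sum, and both diagonal sums of the
3×3 matrix `M` of nonnegative integers equal `m`, and all entries are distinct. -/
def IsMagic (M : Matrix (Fin 3) (Fin 3) ℕ) (m : ℕ) : Prop :=
  (Function.Injective fun p : Fin 3 × Fin 3 => M p.1 p.2) ∧
  (∀ i, ∑ j, M i j = m) ∧
  (∀ j, ∑ i, M i j = m) ∧
  (∑ i, M i i = m) ∧
  (∑ i, M i i.rev = m)

/-- A magic square of order 3. -/
def IsMagicSquare (M : Matrix (Fin 3) (Fin 3) ℕ) : Prop := ∃ m, IsMagic M m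


/-- A reduced magic square of order 3: a magic square one of whose entries
is 0, and with `c₃ < a₁`, `c₃ < a₃`, `c₃ < c₁`, `c₁ < a₃`. -/
def IsReducedMagic (M : Matrix (Fin 3) (Fin 3) ℕ) : Prop :=
  IsMagicSquare M ∧ (∃ i j, M i j = 0) ∧
  M 2 2 < M 0 0 ∧ M 2 2 < M 0 2 ∧ M 2 2 < M 2 0 ∧ M 2 0 < M 0 2

def Cz : Matrix (Fin 3) (Fin 3) ℤ := !![2,0,1; 0,1,2; 1,2,0]
def Dz : Matrix (Fin 3) (Fin 3) ℤ := !![3,0,3; 2,2,2; 1,4,1]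
def T1z : Matrix (Fin 3) (Fin 3) ℤ := !![7,0,5; 2,4,6; 3,8,1]

/-- The defining line sums of a magic square with magic number `m`, without the requirement that
the entries be distinct, and with entries in an arbitrary additive commutative monoid. -/
structure HasMagicSum {R : Type*} [AddCommMonoid R] {n : ℕ} (M : Matrix (Fin n) (Fin n) R)
    (m : R) : Prop where
  row (i : Fin n) : ∑ j, M i j = m
  col (j : Fin n) : ∑ i, M i j = m
  diag : ∑ i, M i i = m
  antidiag : ∑ i, M i i.rev = m

/-- Lucas' parametrization of the order-3 arrays with constant line sums: `e` is the centre, and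
`p`, `q` are the excesses over `e` of the top left and top right corners. -/
def lucasSquare {R : Type*} [AddCommGroup R] (e p q : R) : Matrix (Fin 3) (Fin 3) R :=
  !![e + p, e - p - q, e + q;
     e - p + q, e, e + p - q;
     e - q, e + p + q, e - p]

namespace HasMagicSum

theorem map {R S : Type*} [AddCommMonoid R] [AddCommMonoid S] {n : ℕ}
    {M : Matrix (Fin n) (Fin n) R} {m : R} (hM : HasMagicSum M m) (f : R →+ S) :
    HasMagicSum (M.map f) (f m) where
  row i := by simp only [Matrix.map_apply, ← map_sum, hM.row]
  col j := by simp only [Matrix.map_apply, ← map_sum, hM.col]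
  diag := by simp only [Matrix.map_apply, ← map_sum, hM.diag]
  antidiag := by simp only [Matrix.map_apply, ← map_sum, hM.antidiag]

section AddCommMonoid

variable {R : Type*} [AddCommMonoid R] {M : Matrix (Fin 3) (Fin 3) R} {m : R}

theorem row_add (hM : HasMagicSum M m) (i : Fin 3) : M i 0 + M i 1 + M i 2 = m := by
  rw [← Fin.sum_univ_three, hM.row]

theorem col_add (hM : HasMagicSum M m) (j : Fin 3) : M 0 j + M 1 j + M 2 j = m := by
  rw [← Fin.sum_univ_three fun i => M i j, hM.col]

theorem diag_add (hM : HasMagicSum M m) : M 0 0 + M 1 1 + M 2 2 = m := by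
  rw [← Fin.sum_univ_three fun i => M i i, hM.diag]

theorem antidiag_add (hM : HasMagicSum M m) : M 0 2 + M 1 1 + M 2 0 = m :=
  (Fin.sum_univ_three fun i => M i i.rev).symm.trans hM.antidiag

end AddCommMonoid

section AddCommGroup

variable {R : Type*} [AddCommGroup R] {M : Matrix (Fin 3) (Fin 3) R} {m : R}

theorem three_nsmul_center (hM : HasMagicSum M m) : 3 • M 1 1 = m :=
  -- The two diagonals and the middle column cover the outer rows once and the centre three times.
  calc 3 • M 1 1
      = (M 0 0 + M 1 1 + M 2 2) + (M 0 2 + M 1 1 + M 2 0) + (M 0 1 + M 1 1 + M 2 1)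
          - (M 0 0 + M 0 1 + M 0 2) - (M 2 0 + M 2 1 + M 2 2) := by abel
    _ = m + m + m - m - m := by
      rw [hM.diag_add, hM.antidiag_add, hM.col_add, hM.row_add, hM.row_add]
    _ = m := by abel

theorem eq_lucasSquare (hM : HasMagicSum M m) :
    M = lucasSquare (M 1 1) (M 0 0 - M 1 1) (M 0 2 - M 1 1) := by
  have hcenter := hM.three_nsmul_center
  have h22 : M 2 2 = M 1 1 - (M 0 0 - M 1 1) := by grind [hM.diag_add]
  have h20 : M 2 0 = M 1 1 - (M 0 2 - M 1 1) := by grind [hM.antidiag_add]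
  have h01 : M 0 1 = M 1 1 - (M 0 0 - M 1 1) - (M 0 2 - M 1 1) := by grind [hM.row_add 0]
  have h21 : M 2 1 = M 1 1 + (M 0 0 - M 1 1) + (M 0 2 - M 1 1) := by grind [hM.row_add 2]
  have h10 : M 1 0 = M 1 1 - (M 0 0 - M 1 1) + (M 0 2 - M 1 1) := by grind [hM.col_add 0]
  have h12 : M 1 2 = M 1 1 + (M 0 0 - M 1 1) - (M 0 2 - M 1 1) := by grind [hM.col_add 2]
  rw [lucasSquare, ← h01, ← h10, ← h12, ← h20, ← h21, ← h22, add_sub_cancel, add_sub_cancel]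
  exact M.eta_fin_three

end AddCommGroup

end HasMagicSum

theorem lucasSquare_apply {R : Type*} [AddCommGroup R] (e p q : R) (i j : Fin 3) :
    lucasSquare e p q i j = e - p - q + Cz i j • p + (Dz i j - Cz i j) • q := by
  fin_cases i <;> fin_cases j <;> simp [lucasSquare, Cz, Dz] <;> abel

theorem lucasSquare_add (p q : ℤ) : lucasSquare (p + q) p q = (p - q) • Cz + q • Dz := by
  ext i j
  simp only [lucasSquare_apply, Matrix.add_apply, Matrix.smul_apply, smul_eq_mul]
  ring

theorem Cz_nonneg (i j : Fin 3) : 0 ≤ Cz i j := by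
  fin_cases i <;> fin_cases j <;> decide

theorem Cz_le_Dz (i j : Fin 3) : Cz i j ≤ Dz i j := by
  fin_cases i <;> fin_cases j <;> decide

section Order

variable {R : Type*} [AddCommGroup R] [PartialOrder R] [IsOrderedAddMonoid R] {e p q : R}

theorem sub_sub_le_lucasSquare (hp : 0 ≤ p) (hq : 0 ≤ q) (i j : Fin 3) :
    e - p - q ≤ lucasSquare e p q i j := by
  have hC : 0 ≤ Cz i j • p := zsmul_nonneg hp (Cz_nonneg i j)
  have hD : 0 ≤ (Dz i j - Cz i j) • q := zsmul_nonneg hq (sub_nonneg.2 (Cz_le_Dz i j))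
  rw [lucasSquare_apply, add_assoc]
  exact le_add_of_nonneg_right (add_nonneg hC hD)

theorem center_eq_add_of_lucasSquare_eq_zero (hp : 0 ≤ p) (hq : 0 ≤ q)
    (hmin : 0 ≤ e - p - q) {i j : Fin 3} (hzero : lucasSquare e p q i j = 0) : e = p + q := by
  have hle : e - p - q ≤ 0 := hzero ▸ sub_sub_le_lucasSquare hp hq i j
  rw [← sub_eq_zero, ← sub_sub]
  exact le_antisymm hle hmin

end Order

theorem T1z_eq : T1z = (2 : ℤ) • Cz + Dz := by
  decide

theorem reduced_magic_square_decomposition_general {M : Matrix (Fin 3) (Fin 3) ℕ} {m : ℕ}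
    (hM : HasMagicSum M m) (hzero : ∃ i j, M i j = 0)
    (hbottom : M 2 2 < M 2 0) (hanti : M 2 0 < M 0 2) :
    ∃ α β : ℤ, -1 ≤ α ∧ 0 ≤ β ∧
      M.map (Nat.cast : ℕ → ℤ) = T1z + α • Cz + β • Dz := by
  obtain ⟨e, p, q, hlucas⟩ : ∃ e p q : ℤ, M.map (Nat.cast : ℕ → ℤ) = lucasSquare e p q :=
    ⟨_, _, _, (hM.map (Nat.castAddMonoidHom ℤ)).eq_lucasSquare⟩
  have entry (i j : Fin 3) : (M i j : ℤ) = lucasSquare e p q i j := congrFun₂ hlucas i j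
  have h01 : (M 0 1 : ℤ) = e - p - q := entry 0 1
  have h02 : (M 0 2 : ℤ) = e + q := entry 0 2
  have h20 : (M 2 0 : ℤ) = e - q := entry 2 0
  have h22 : (M 2 2 : ℤ) = e - p := entry 2 2
  have hq : 0 < q := by lia
  have hqp : q < p := by lia
  obtain ⟨i, j, hij⟩ := hzero
  have hlucas_zero : lucasSquare e p q i j = 0 := by rw [← entry, hij, Nat.cast_zero]
  have he : e = p + q :=
    center_eq_add_of_lucasSquare_eq_zero (hq.trans hqp).le hq.le (by lia) hlucas_zero
  refine ⟨p - q - 2, q - 1, by lia, by lia, ?_⟩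
  rw [hlucas, he, lucasSquare_add, T1z_eq]
  module

/-- Every reduced magic square can be written as `T₁ + α·C + β·D` with
integers `α ≥ −1` and `β ≥ 0`. -/
theorem reduced_magic_square_decomposition (M : Matrix (Fin 3) (Fin 3) ℕ)
    (h : IsReducedMagic M) :
    ∃ α β : ℤ, -1 ≤ α ∧ 0 ≤ β ∧
      M.map (Nat.cast : ℕ → ℤ) = T1z + α • Cz + β • Dz := by
  obtain ⟨⟨m, -, hrow, hcol, hdiag, hantidiag⟩, hzero, -, -, hbottom, hanti⟩ := h
  exact reduced_magic_square_decomposition_general ⟨hrow, hcol, hdiag, hantidiag⟩ hzero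
    hbottom hanti
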